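/- arXiv:2406.14332 — 2 statements merged into one kernel-verified Lean document; each statement's English description precedes it below -/
import Mathlib

section
/- Let D be a digraph with n vertices and S ⊆ V(D). If for every pair of distinct vertices u, v ∈ S there is a directed path from u to v and from v to u in D, and if d(u) + d(v) ≥ 2n − 3 for every pair of nonadjacent vertices u, v ∈ S, then D contains a closed directed trail passing through all vertices of S. -/
/-- A directed walk: consecutive vertices are joined by arcs. -/
def IsDiwalk {V : Type*} (A : V → V → Prop) : List V → Prop
  | [] => True
  | [_] => True
  | a :: b :: l => A a b ∧ IsDiwalk A (b :: l)

/-- The list of arcs traversed by a walk given as a vertex list. -/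
def arcList {V : Type*} (l : List V) : List (V × V) := l.zip l.tail

/-- A directed trail: a directed walk with no repeated arcs. -/
def IsDitrail {V : Type*} (A : V → V → Prop) (l : List V) : Prop :=
  IsDiwalk A l ∧ (arcList l).Nodup

/-- A closed directed trail: a directed trail whose first and last vertices coincide. -/
def IsClosedDitrail {V : Type*} (A : V → V → Prop) (l : List V) : Prop :=
  IsDitrail A l ∧ l.head? = l.getLast?

/-- A directed path from `u` to `v` (no repeated vertices). -/
def IsDipathFrom {V : Type*} (A : V → V → Prop) (u v : V) (l : List V) : Prop :=
  IsDiwalk A l ∧ l.Nodup ∧ l.head? = some u ∧ l.getLast? = some v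

/-- Reachability by a directed path. -/
def DiReach {V : Type*} (A : V → V → Prop) (u v : V) : Prop :=
  ∃ l, IsDipathFrom A u v l

/-- There is a directed trail from the first to the second vertex whose set of vertices and
set of arcs are the given ones. -/
inductive HasTrail {V : Type*} (A : V → V → Prop) : V → V → Set V → Set (V × V) → Prop
  | nil (u : V) : HasTrail A u u {u} ∅
  | cons {u b v : V} {X : Set V} {E : Set (V × V)} (h : A u b) (hn : (u, b) ∉ E)
      (t : HasTrail A b v X E) : HasTrail A u v (insert u X) (insert (u, b) E)

namespace HasTrail

variable {V : Type*} {A : V → V → Prop} {u v w h g : V} {X Y : Set V} {E F : Set (V × V)}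

theorem left_mem (t : HasTrail A u v X E) : u ∈ X := by
  cases t <;> simp

theorem right_mem (t : HasTrail A u v X E) : v ∈ X := by
  induction t with
  | nil => simp
  | cons _ _ _ ih => exact Set.mem_insert_of_mem _ ih

theorem arc_mem (t : HasTrail A u v X E) : ∀ e ∈ E, e.1 ∈ X ∧ e.2 ∈ X := by
  induction t with
  | nil => simp
  | cons _ _ t ih =>
    rintro e (rfl | he)
    · exact ⟨Set.mem_insert _ _, Set.mem_insert_of_mem _ t.left_mem⟩
    · exact ⟨Set.mem_insert_of_mem _ (ih e he).1, Set.mem_insert_of_mem _ (ih e he).2⟩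

theorem arcs_nonempty (t : HasTrail A u v X E) (huv : u ≠ v) : E.Nonempty := by
  cases t with
  | nil => exact absurd rfl huv
  | cons => exact Set.insert_nonempty _ _

theorem single (h : A u v) : HasTrail A u v {u, v} {(u, v)} := by
  simpa using cons h (Set.notMem_empty _) (nil v)

theorem append (t : HasTrail A u v X E) (t' : HasTrail A v w Y F) (hd : Disjoint E F) :
    HasTrail A u w (X ∪ Y) (E ∪ F) := by
  induction t with
  | nil => simpa [Set.insert_eq_of_mem t'.left_mem] using t'
  | cons hA hn t ih =>
    rw [Set.disjoint_insert_left] at hd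
    rw [Set.insert_union, Set.insert_union]
    exact cons hA (by simp [hn, hd.1]) (ih t' hd.2)

theorem split (t : HasTrail A u v X E) (hg : g ∈ X) :
    ∃ X₁ E₁ X₂ E₂, HasTrail A u g X₁ E₁ ∧ HasTrail A g v X₂ E₂ ∧ Disjoint E₁ E₂ ∧
      X₁ ∪ X₂ = X ∧ E₁ ∪ E₂ = E := by
  induction t with
  | nil u =>
    obtain rfl : g = u := hg
    exact ⟨_, _, _, _, nil g, nil g, by simp, by simp, by simp⟩
  | @cons u b v X E hA hn t ih =>
    by_cases hgu : g = u
    · subst hgu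
      exact ⟨_, _, _, _, nil g, cons hA hn t, by simp, by simp, by simp⟩
    · obtain ⟨X₁, E₁, X₂, E₂, t₁, t₂, hd, rfl, rfl⟩ := ih (hg.resolve_left hgu)
      simp only [Set.mem_union, not_or] at hn
      exact ⟨_, _, _, _, cons hA hn.1 t₁, t₂, by simp [Set.disjoint_insert_left, hn.2, hd],
        Set.insert_union .., Set.insert_union ..⟩

theorem rotate (t : HasTrail A u u X E) (hg : g ∈ X) : HasTrail A g g X E := by
  obtain ⟨X₁, E₁, X₂, E₂, t₁, t₂, hd, rfl, rfl⟩ := t.split hg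
  rw [Set.union_comm X₁, Set.union_comm E₁]
  exact t₂.append t₁ hd.symm

/-- A vertex joined in both directions to a vertex of a closed trail can be added to it. -/
theorem insert_vertex (t : HasTrail A u u X E) (hh : h ∈ X) (hg : g ∉ X) (h₁ : A h g)
    (h₂ : A g h) : ∃ F, HasTrail A h h (insert g X) F := by
  have hgh : g ≠ h := fun e => hg (e ▸ hh)
  have hd : Disjoint E {(h, g)} := by
    simpa using fun he => hg (t.arc_mem _ he).2
  have hd' : Disjoint (E ∪ {(h, g)}) {(g, h)} := by
    simpa [hgh] using fun he => hg (t.arc_mem _ he).1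
  have := ((t.rotate hh).append (single h₁) hd).append (single h₂) hd'
  have hX : X ∪ {h, g} ∪ {g, h} = insert g X := by
    ext z
    simp only [Set.mem_union, Set.mem_insert_iff, Set.mem_singleton_iff]
    grind
  exact ⟨_, hX ▸ this⟩

theorem exists_list (t : HasTrail A u v X E) :
    ∃ l : List V, IsDiwalk A (u :: l) ∧ (arcList (u :: l)).Nodup ∧
      (∀ e, e ∈ arcList (u :: l) ↔ e ∈ E) ∧ (u :: l).getLast? = some v ∧
      ∀ z, z ∈ u :: l ↔ z ∈ X := by
  induction t with
  | nil u => exact ⟨[], by simp [IsDiwalk, arcList]⟩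
  | @cons u b v X E hA hn t ih =>
    obtain ⟨l, h₁, h₂, h₃, h₄, h₅⟩ := ih
    have harc : arcList (u :: b :: l) = (u, b) :: arcList (b :: l) := rfl
    refine ⟨b :: l, ⟨hA, h₁⟩, ?_, ?_, by simpa using h₄, ?_⟩
    · rw [harc, List.nodup_cons, h₃]
      exact ⟨hn, h₂⟩
    · intro e
      rw [harc, List.mem_cons, h₃, Set.mem_insert_iff]
    · intro z
      rw [List.mem_cons, h₅, Set.mem_insert_iff]

end HasTrail

/-- There is a trail from `x` to `v` with arc set `E` that enters `v` only at its end, and whose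
vertices after the first avoid `H`. -/
def TrailFromSet {V : Type*} (A : V → V → Prop) (H : Set V) (v x : V) (E : Set (V × V)) : Prop :=
  (∃ X, HasTrail A x v X E) ∧ ∀ e ∈ E, e.2 ∉ H ∧ e.1 ≠ v

/-- There is a trail from `v` to `y` with arc set `E` that visits `v` only at its start, and whose
vertices before the last avoid `H`. -/
def TrailToSet {V : Type*} (A : V → V → Prop) (H : Set V) (v y : V) (E : Set (V × V)) : Prop :=
  (∃ X, HasTrail A v y X E) ∧ ∀ e ∈ E, e.1 ∉ H ∧ e.2 ≠ v

/-- There is a trail from `x` to `y` through `v` whose inner vertices avoid `H`. -/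
def HasBypass {V : Type*} (A : V → V → Prop) (H : Set V) (v x y : V) : Prop :=
  ∃ E F, TrailFromSet A H v x E ∧ TrailToSet A H v y F ∧ Disjoint E F

section

variable {V : Type*} {A : V → V → Prop} {H : Set V} {v x y g : V} {E : Set (V × V)}

theorem exists_trailFromSet_of_list (hv : v ∉ H) :
    ∀ (l : List V) (a : V), IsDiwalk A (a :: l) → (a :: l).Nodup → (a :: l).getLast? = some v →
      ∃ x X E, HasTrail A x v X E ∧ (∀ z ∈ X, z ∈ a :: l) ∧ (∀ e ∈ E, e.2 ∉ H ∧ e.1 ≠ v) ∧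
        (x ∈ H ∨ x = a)
  | [], a, _, _, hl => by
    obtain rfl : a = v := by simpa using hl
    exact ⟨a, _, _, .nil a, by simp, by simp, .inr rfl⟩
  | b :: l, a, hw, hn, hl => by
    have hl' : (b :: l).getLast? = some v := by simpa using hl
    obtain ⟨ha, hn'⟩ := List.nodup_cons.1 hn
    obtain ⟨x, X, E, t, hX, hE, hx⟩ := exists_trailFromSet_of_list hv l b hw.2 hn' hl'
    by_cases hxH : x ∈ H
    · exact ⟨x, X, E, t, fun z hz => List.mem_cons_of_mem _ (hX z hz), hE, .inl hxH⟩
    · obtain rfl := hx.resolve_left hxH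
      refine ⟨a, _, _, .cons hw.1 (fun he => ha (hX _ (t.arc_mem _ he).1)) t, ?_, ?_, .inr rfl⟩
      · rintro z (rfl | hz)
        · simp
        · exact List.mem_cons_of_mem _ (hX z hz)
      · rintro e (rfl | he)
        · exact ⟨hxH, fun (h : a = v) => ha (h ▸ List.mem_of_getLast? hl')⟩
        · exact hE e he

theorem exists_trailFromSet (hv : v ∉ H) (hg : g ∈ H) (hr : DiReach A g v) :
    ∃ x ∈ H, ∃ E, TrailFromSet A H v x E := by
  obtain ⟨l, hw, hn, hh, hl⟩ := hr
  obtain ⟨l, rfl⟩ := List.head?_eq_some_iff.1 hh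
  obtain ⟨x, X, E, t, -, hE, hx⟩ := exists_trailFromSet_of_list hv l g hw hn hl
  exact ⟨x, hx.elim id (fun h => h ▸ hg), E, ⟨X, t⟩, hE⟩

theorem exists_trail_to_set_of_list (hg : g ∈ H) :
    ∀ (l : List V) (a : V), IsDiwalk A (a :: l) → (a :: l).Nodup → (a :: l).getLast? = some g →
      ∃ y ∈ H, ∃ X E, HasTrail A a y X E ∧ (∀ z ∈ X, z ∈ a :: l) ∧ ∀ e ∈ E, e.1 ∉ H ∧ e.2 ∈ l
  | [], a, _, _, hl => by
    obtain rfl : a = g := by simpa using hl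
    exact ⟨a, hg, _, _, .nil a, by simp, by simp⟩
  | b :: l, a, hw, hn, hl => by
    by_cases haH : a ∈ H
    · exact ⟨a, haH, _, _, .nil a, by simp, by simp⟩
    · have hl' : (b :: l).getLast? = some g := by simpa using hl
      obtain ⟨ha, hn'⟩ := List.nodup_cons.1 hn
      obtain ⟨y, hy, X, E, t, hX, hE⟩ := exists_trail_to_set_of_list hg l b hw.2 hn' hl'
      refine ⟨y, hy, _, _, .cons hw.1 (fun he => ha (hX _ (t.arc_mem _ he).1)) t, ?_, ?_⟩
      · rintro z (rfl | hz)
        · simp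
        · exact List.mem_cons_of_mem _ (hX z hz)
      · rintro e (rfl | he)
        · exact ⟨haH, List.mem_cons_self⟩
        · exact ⟨(hE e he).1, List.mem_cons_of_mem _ (hE e he).2⟩

theorem exists_trailToSet (hg : g ∈ H) (hr : DiReach A v g) :
    ∃ y ∈ H, ∃ E, TrailToSet A H v y E := by
  obtain ⟨l, hw, hn, hh, hl⟩ := hr
  obtain ⟨l, rfl⟩ := List.head?_eq_some_iff.1 hh
  obtain ⟨y, hy, X, E, t, -, hE⟩ := exists_trail_to_set_of_list hg l v hw hn hl
  exact ⟨y, hy, E, ⟨X, t⟩, fun e he =>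
    ⟨(hE e he).1, fun h => (List.nodup_cons.1 hn).1 (h ▸ (hE e he).2)⟩⟩

/-- `v` reaches `g` by one arc, or by two arcs through a vertex outside `H`. -/
def ShortTo (A : V → V → Prop) (H : Set V) (v g : V) : Prop :=
  A v g ∨ ∃ w, w ∉ H ∧ w ≠ v ∧ A v w ∧ A w g

theorem TrailFromSet.hasBypass (t : TrailFromSet A H v x E) (hv : v ∉ H) (hg : g ∈ H)
    (h : ShortTo A H v g) : HasBypass A H v x g := by
  have hgv : g ≠ v := fun e => hv (e ▸ hg)
  rcases h with h | ⟨w, hw, hwv, h₁, h₂⟩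
  · refine ⟨E, _, t, ⟨⟨_, .single h⟩, ?_⟩, ?_⟩
    · rintro e rfl
      exact ⟨hv, hgv⟩
    · simpa using fun he => (t.2 _ he).2 rfl
  · refine ⟨E, _, t, ⟨⟨_, .cons h₁ ?_ (.single h₂)⟩, ?_⟩, ?_⟩
    · simp [hwv.symm]
    · rintro e (rfl | rfl)
      · exact ⟨hv, hwv⟩
      · exact ⟨hw, hgv⟩
    · rw [Set.disjoint_right]
      rintro e (rfl | rfl) he
      · exact (t.2 _ he).2 rfl
      · exact (t.2 _ he).1 hg

theorem TrailToSet.hasBypass (t : TrailToSet A H v y E) (hv : v ∉ H) (hg : g ∈ H)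
    (h : ShortTo (flip A) H v g) : HasBypass A H v g y := by
  have hgv : g ≠ v := fun e => hv (e ▸ hg)
  rcases h with h | ⟨w, hw, hwv, h₁, h₂⟩
  · refine ⟨_, E, ⟨⟨_, .single h⟩, ?_⟩, t, ?_⟩
    · rintro e rfl
      exact ⟨hv, hgv⟩
    · simpa using fun he => (t.2 _ he).2 rfl
  · refine ⟨_, E, ⟨⟨_, .cons h₂ ?_ (.single h₁)⟩, ?_⟩, t, ?_⟩
    · simp [hwv]
    · rintro e (rfl | rfl)
      · exact ⟨hw, hgv⟩
      · exact ⟨hv, hwv⟩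
    · rw [Set.disjoint_left]
      rintro e (rfl | rfl) he
      · exact (t.2 _ he).1 hg
      · exact (t.2 _ he).2 rfl

end

open Classical in
/-- If at most two arcs join each further vertex to the nonadjacent vertices `v` and `g`, then the
degrees of `v` and `g` sum to at most `2 * (n - 2)`. -/
theorem degree_add_degree_le {V : Type*} [Fintype V] {A : V → V → Prop} {v g : V} (hvg : v ≠ g)
    (hv : ¬ A v v) (hg : ¬ A g g) (h₁ : ¬ A v g) (h₂ : ¬ A g v)
    (hle : ∀ w, w ≠ v → w ≠ g → (if A v w then 1 else 0) + (if A w v then 1 else 0) +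
      ((if A g w then 1 else 0) + (if A w g then 1 else 0)) ≤ 2) :
    ({w | A v w}.ncard + {w | A w v}.ncard) + ({w | A g w}.ncard + {w | A w g}.ncard) + 4 ≤
      2 * Fintype.card V := by
  have key (p : V → Prop) : {w | p w}.ncard = ∑ w, if p w then 1 else 0 := by
    rw [Set.ncard_eq_toFinset_card', Set.toFinset_ofPred, Finset.card_filter]
  rw [key, key, key, key, ← Finset.sum_add_distrib, ← Finset.sum_add_distrib,
    ← Finset.sum_add_distrib]
  have hsum : ∑ w : V, (if w = v then 2 else 0) + ∑ w : V, (if w = g then 2 else 0) = 4 := by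
    simp
  rw [← hsum, ← Finset.sum_add_distrib, ← Finset.sum_add_distrib]
  have hc : ∑ _w : V, 2 = 2 * Fintype.card V := by simp [mul_comm]
  rw [← hc]
  refine Finset.sum_le_sum fun w _ => ?_
  by_cases hwv : w = v
  · subst hwv
    simp [hv, h₁, h₂, hvg]
  by_cases hwg : w = g
  · subst hwg
    simp [hg, h₁, h₂, hwv]
  simpa [hwv, hwg] using hle w hwv hwg

/-- A closed trail which meets `S` in as many vertices as possible covers `S`. -/
theorem subset_of_maximal {V : Type*} [Fintype V] {A : V → V → Prop} (hirr : ∀ v, ¬ A v v)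
    {S H : Set V} {u s : V} {E : Set (V × V)} (t : HasTrail A u u H E) (hs : s ∈ S) (hsH : s ∈ H)
    (hmax : ∀ u X E, HasTrail A u u X E → (S ∩ X).ncard ≤ (S ∩ H).ncard)
    (hstrong : ∀ u ∈ S, ∀ v ∈ S, u ≠ v → DiReach A u v ∧ DiReach A v u)
    (hdeg : ∀ u ∈ S, ∀ v ∈ S, u ≠ v → ¬ A u v → ¬ A v u →
      2 * Fintype.card V - 3 ≤ ({w | A u w}.ncard + {w | A w u}.ncard) +
        ({w | A v w}.ncard + {w | A w v}.ncard)) :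
    S ⊆ H := by
  classical
  intro v hvS
  by_contra hv
  -- no closed trail covers `S ∩ H` and `v`
  have hext : ∀ u X E, HasTrail A u u X E → S ∩ H ⊆ X → v ∉ X := by
    intro u X E t' hX hvX
    have hlt : (S ∩ H).ncard < (S ∩ X).ncard := by
      refine Set.ncard_lt_ncard ⟨fun z hz => ⟨hz.1, hX hz⟩, fun h => hv (h ⟨hvS, hvX⟩).2⟩
        (Set.toFinite _)
    exact absurd (hmax u X E t') (not_le.2 hlt)
  have hone : ∀ w ∈ H, ¬ (A v w ∧ A w v) := by
    rintro w hw ⟨h₁, h₂⟩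
    obtain ⟨F, t'⟩ := t.insert_vertex hw hv h₂ h₁
    exact hext _ _ _ t' (fun z hz => Set.mem_insert_of_mem _ hz.2) (Set.mem_insert _ _)
  -- the degree condition excludes a vertex of `S ∩ H` with few connections to `v`
  have hcount : ∀ R : Set V, (∀ w ∈ H, w ∉ R → ¬ ShortTo A H v w ∧ ¬ ShortTo (flip A) H v w) →
      ∀ g ∈ S, g ∈ H → g ∉ R → ∃ w ∈ R, w ∈ H ∧ A g w ∧ A w g := by
    intro R hR g hgS hgH hgR
    by_contra! hno
    obtain ⟨hto, hfrom⟩ := hR g hgH hgR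
    have hvg : v ≠ g := fun e => hv (e ▸ hgH)
    have h₁ : ¬ A v g := fun h => hto (.inl h)
    have h₂ : ¬ A g v := fun h => hfrom (.inl h)
    have hle := degree_add_degree_le hvg (hirr v) (hirr g) h₁ h₂ fun w hwv hwg => by
      by_cases hwH : w ∈ H
      · by_cases hwR : w ∈ R
        · have := hone w hwH
          have := hno w hwR hwH
          split_ifs <;> simp_all
        · have h₃ : ¬ A v w := fun h => (hR w hwH hwR).1 (.inl h)
          have h₄ : ¬ A w v := fun h => (hR w hwH hwR).2 (.inl h)
          split_ifs <;> simp_all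
      · have h₃ : ¬ (A v w ∧ A w g) := fun h => hto (.inr ⟨w, hwH, hwv, h.1, h.2⟩)
        have h₄ : ¬ (A w v ∧ A g w) := fun h => hfrom (.inr ⟨w, hwH, hwv, h.1, h.2⟩)
        split_ifs <;> simp_all
    have := hdeg v hvS g hgS hvg h₁ h₂
    omega
  obtain ⟨hr₁, hr₂⟩ := hstrong s hs v hvS (fun e => hv (e ▸ hsH))
  -- some bypass of the closed trail runs through `v`
  have hbypass : ∃ x ∈ H, ∃ y ∈ H, HasBypass A H v x y := by
    by_contra! hno
    obtain ⟨x, hx, E₁, t₁⟩ := exists_trailFromSet hv hsH hr₁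
    obtain ⟨y, hy, E₂, t₂⟩ := exists_trailToSet hsH hr₂
    obtain ⟨w, hw, -⟩ := hcount ∅ (fun w hw _ =>
      ⟨fun h => hno x hx w hw (t₁.hasBypass hv hw h),
        fun h => hno w hw y hy (t₂.hasBypass hv hw h)⟩) s hs hsH (Set.notMem_empty _)
    exact hw
  -- choose a bypass which replaces as few arcs as possible
  let gaps : Set (Set (V × V)) := {EQ | ∃ x y XQ XR ER, HasTrail A x y XQ EQ ∧
    HasTrail A y x XR ER ∧ Disjoint EQ ER ∧ XQ ∪ XR = H ∧ HasBypass A H v x y}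
  have hgaps : gaps.Nonempty := by
    obtain ⟨x, hx, y, hy, hb⟩ := hbypass
    obtain ⟨X₁, E₁, X₂, E₂, t₁, t₂, hd, hX, -⟩ := (t.rotate hx).split hy
    exact ⟨E₁, x, y, X₁, X₂, E₂, t₁, t₂, hd, hX, hb⟩
  obtain ⟨EQ, ⟨x, y, XQ, XR, ER, tQ, tR, hd, hH, hb⟩, hmin⟩ :=
    Set.exists_min_image gaps Set.ncard (Set.toFinite _) hgaps
  obtain ⟨E₁, E₂, t₁, t₂, hd₁₂⟩ := hb
  have hQH : XQ ⊆ H := hH ▸ Set.subset_union_left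
  have hRH : XR ⊆ H := hH ▸ Set.subset_union_right
  have hgap : ∀ w ∈ H, w ∉ XR → ¬ ShortTo A H v w ∧ ¬ ShortTo (flip A) H v w := by
    intro w hw hwR
    have hwQ : w ∈ XQ := (hH ▸ hw : w ∈ XQ ∪ XR).resolve_right hwR
    have hwx : w ≠ x := fun e => hwR (e ▸ tR.right_mem)
    have hwy : w ≠ y := fun e => hwR (e ▸ tR.left_mem)
    obtain ⟨X₃, E₃, X₄, E₄, t₃, t₄, hd₃₄, rfl, rfl⟩ := tQ.split hwQ
    rw [Set.disjoint_union_left] at hd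
    have hcard := Set.ncard_union_eq hd₃₄ (Set.toFinite _) (Set.toFinite _)
    have h₃ := (Set.ncard_pos (Set.toFinite _)).2 (t₃.arcs_nonempty hwx.symm)
    have h₄ := (Set.ncard_pos (Set.toFinite _)).2 (t₄.arcs_nonempty hwy)
    constructor
    · intro h
      have := hmin E₃ ⟨x, w, X₃, X₄ ∪ XR, E₄ ∪ ER, t₃, t₄.append tR hd.2,
        Set.disjoint_union_right.2 ⟨hd₃₄, hd.1⟩, by rw [← hH, Set.union_assoc],
        t₁.hasBypass hv hw h⟩
      omega
    · intro h
      have := hmin E₄ ⟨w, y, X₄, XR ∪ X₃, ER ∪ E₃, t₄, tR.append t₃ hd.1.symm,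
        Set.disjoint_union_right.2 ⟨hd.2, hd₃₄.symm⟩,
        by rw [← hH, ← Set.union_assoc, Set.union_comm, Set.union_assoc],
        t₂.hasBypass hv hw h⟩
      omega
  -- extend the closed trail that uses the bypass by as many vertices as possible
  let trails : Set (Set V) := {X | XR ⊆ X ∧ v ∈ X ∧ ∃ u E, HasTrail A u u X E}
  have htrails : trails.Nonempty := by
    obtain ⟨⟨X₁, p₁⟩, hE₁⟩ := t₁
    obtain ⟨⟨X₂, p₂⟩, hE₂⟩ := t₂
    have hdR : Disjoint (E₁ ∪ E₂) ER := by
      rw [Set.disjoint_left]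
      rintro e (he | he) heR
      · exact (hE₁ e he).1 (hRH (tR.arc_mem e heR).2)
      · exact (hE₂ e he).1 (hRH (tR.arc_mem e heR).1)
    exact ⟨_, Set.subset_union_right, .inl (.inl p₁.right_mem), _, _,
      (p₁.append p₂ hd₁₂).append tR hdR⟩
  obtain ⟨X, ⟨hRX, hvX, u', E', t'⟩, hXmax⟩ :=
    Set.exists_max_image trails Set.ncard (Set.toFinite _) htrails
  obtain ⟨g, hg, hgX⟩ : ∃ g ∈ S ∩ H, g ∉ X := Set.not_subset.1 fun h => hext _ _ _ t' h hvX
  obtain ⟨w, hwR, -, h₁, h₂⟩ := hcount XR hgap g hg.1 hg.2 (fun h => hgX (hRX h))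
  obtain ⟨F, t''⟩ := t'.insert_vertex (hRX hwR) hgX h₂ h₁
  have := hXmax (insert g X) ⟨hRX.trans (Set.subset_insert _ _), .inr hvX, _, _, t''⟩
  rw [Set.ncard_insert_of_notMem hgX (Set.toFinite _)] at this
  omega

/-- degree condition for a subset `S` to be closed-trailable. -/
theorem stmt_1 {V : Type*} [Fintype V] (n : ℕ) (hn : Fintype.card V = n)
    (A : V → V → Prop) (hirr : ∀ v, ¬ A v v) (S : Set V)
    (hstrong : ∀ u ∈ S, ∀ v ∈ S, u ≠ v → DiReach A u v ∧ DiReach A v u)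
    (hdeg : ∀ u ∈ S, ∀ v ∈ S, u ≠ v → ¬ A u v → ¬ A v u →
      2 * n - 3 ≤ ({w | A u w}.ncard + {w | A w u}.ncard) +
        ({w | A v w}.ncard + {w | A w v}.ncard)) :
    ∃ l : List V, IsClosedDitrail A l ∧ ∀ v ∈ S, v ∈ l := by
  subst hn
  rcases S.eq_empty_or_nonempty with rfl | ⟨s, hs⟩
  · exact ⟨[], by simp [IsClosedDitrail, IsDitrail, IsDiwalk, arcList]⟩
  obtain ⟨H, ⟨u, E, t⟩, hmax⟩ := Set.exists_max_image {X | ∃ u E, HasTrail A u u X E}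
    (fun X => (S ∩ X).ncard) (Set.toFinite _) ⟨{s}, s, ∅, .nil s⟩
  have hpos : 0 < (S ∩ H).ncard :=
    lt_of_lt_of_le ((Set.ncard_pos (Set.toFinite (S ∩ {s}))).2 ⟨s, hs, rfl⟩)
      (hmax {s} ⟨s, ∅, .nil s⟩)
  obtain ⟨s', hs', hsH⟩ := (Set.ncard_pos (Set.toFinite _)).1 hpos
  have hSH := subset_of_maximal hirr t hs' hsH (fun u X E t => hmax X ⟨u, E, t⟩) hstrong hdeg
  obtain ⟨l, h₁, h₂, -, h₄, h₅⟩ := t.exists_list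
  exact ⟨u :: l, ⟨⟨h₁, h₂⟩, by simpa using h₄.symm⟩, fun v hv => (h₅ v).2 (hSH hv)⟩
end

section
/- Let D be a digraph, S ⊆ V(D), and suppose D⟨S⟩ is semicomplete. If D is S-strong (for every pair of distinct vertices of S there are directed paths in both directions in D) and D contains a closed directed trail meeting S, then D contains a closed directed trail through all vertices of S. -/
section Arcs

variable {V : Type*} {A : V → V → Prop}

theorem arcList_cons_cons (a b : V) (l : List V) :
    arcList (a :: b :: l) = (a, b) :: arcList (b :: l) := rfl

theorem arcList_append_cons (p : List V) (s : V) (q : List V) :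
    arcList (p ++ s :: q) = arcList (p ++ [s]) ++ arcList (s :: q) := by
  induction p with
  | nil => simp [arcList]
  | cons a p ih =>
    cases p with
    | nil => simp [arcList]
    | cons b p =>
      simp only [List.cons_append, arcList_cons_cons] at ih ⊢
      rw [ih]

theorem isDiwalk_iff_forall_mem_arcList (l : List V) :
    IsDiwalk A l ↔ ∀ e ∈ arcList l, A e.1 e.2 := by
  induction l with
  | nil => simp [IsDiwalk, arcList]
  | cons a l ih =>
    cases l with
    | nil => simp [IsDiwalk, arcList]
    | cons b l => simp [IsDiwalk, arcList_cons_cons, ih]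

theorem mem_of_mem_arcList {l : List V} {e : V × V} (h : e ∈ arcList l) :
    e.1 ∈ l ∧ e.2 ∈ l :=
  ⟨(List.of_mem_zip h).1, List.mem_of_mem_tail (List.of_mem_zip h).2⟩

theorem nodup_arcList {l : List V} (h : l.Nodup) : (arcList l).Nodup := by
  induction l with
  | nil => simp [arcList]
  | cons a l ih =>
    cases l with
    | nil => simp [arcList]
    | cons b l =>
      rw [List.nodup_cons] at h
      rw [arcList_cons_cons, List.nodup_cons]
      exact ⟨fun hm => h.1 (mem_of_mem_arcList hm).1, ih h.2⟩

theorem arcList_reverse (l : List V) :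
    arcList l.reverse = ((arcList l).map Prod.swap).reverse := by
  induction l with
  | nil => rfl
  | cons a l ih =>
    cases l with
    | nil => rfl
    | cons b l =>
      have h : (a :: b :: l).reverse = l.reverse ++ b :: [a] := by simp
      rw [h, arcList_append_cons, arcList_cons_cons, arcList_cons_cons, List.map_cons,
        List.reverse_cons, ← ih]
      simp [arcList]

theorem IsDiwalk.reverse {l : List V} (h : IsDiwalk A l) :
    IsDiwalk (flip A) l.reverse := by
  rw [isDiwalk_iff_forall_mem_arcList] at h ⊢
  intro e he
  rw [arcList_reverse, List.mem_reverse, List.mem_map] at he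
  obtain ⟨f, hf, rfl⟩ := he
  exact h f hf

theorem IsClosedDitrail.reverse {l : List V} (h : IsClosedDitrail A l) :
    IsClosedDitrail (flip A) l.reverse := by
  refine ⟨⟨h.1.1.reverse, ?_⟩, ?_⟩
  · rw [arcList_reverse, List.nodup_reverse]
    exact h.1.2.map Prod.swap_injective
  · rw [List.head?_reverse, List.getLast?_reverse, h.2]

theorem DiReach.reverse {u v : V} (h : DiReach A u v) : DiReach (flip A) v u := by
  obtain ⟨l, hw, hn, hh, hl⟩ := h
  exact ⟨l.reverse, hw.reverse, List.nodup_reverse.2 hn, by simpa using hl, by simpa using hh⟩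

/-- A closed ditrail can be rotated to start at any of its vertices. -/
theorem IsClosedDitrail.exists_rotate {l : List V} (h : IsClosedDitrail A l) {s : V}
    (hs : s ∈ l) :
    ∃ q, IsClosedDitrail A (s :: q) ∧ ∀ x, x ∈ s :: q ↔ x ∈ l := by
  obtain ⟨p, q, rfl⟩ := List.append_of_mem hs
  cases p with
  | nil => exact ⟨q, h, fun _ => Iff.rfl⟩
  | cons a p =>
    obtain ⟨⟨hw, hn⟩, hc⟩ := h
    obtain ⟨q', b, hq⟩ : ∃ q' b, s :: q = q' ++ [b] :=
      ⟨_, _, (List.dropLast_append_getLast (List.cons_ne_nil s q)).symm⟩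
    obtain rfl : a = b := by
      rw [hq, ← List.append_assoc, List.getLast?_concat] at hc
      exact Option.some.inj hc
    rw [isDiwalk_iff_forall_mem_arcList] at hw
    rw [arcList_append_cons, hq] at hw hn
    have hr : s :: (q ++ (p ++ [s])) = q' ++ a :: (p ++ [s]) := by
      rw [← List.cons_append, hq]; simp
    refine ⟨q ++ (p ++ [s]), ⟨⟨?_, ?_⟩, ?_⟩, ?_⟩
    · rw [isDiwalk_iff_forall_mem_arcList, hr, arcList_append_cons]
      intro e he
      exact hw e (List.mem_append.2 (List.mem_append.1 he).symm)
    · rw [hr, arcList_append_cons]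
      exact List.nodup_append_comm.1 hn
    · rw [← List.append_assoc, ← List.cons_append, List.getLast?_concat]
      rfl
    · intro x
      have hsx : x = s → x ∈ q' ++ [a] := fun h => hq ▸ h ▸ List.mem_cons_self
      rw [hr, hq]
      simp only [List.mem_append, List.mem_cons] at hsx ⊢
      tauto

end Arcs

section Ears

variable {V : Type*} {A : V → V → Prop}

/-- There is a dipath from `v` to a vertex `x` of `T` which meets `T` only in `x`. -/
def HasEntry (A : V → V → Prop) (T : List V) (v x : V) : Prop :=
  x ∈ T ∧ ∃ R, (v :: R).Nodup ∧ (∀ u ∈ v :: R, u ∉ T) ∧ IsDiwalk A (v :: R ++ [x])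

theorem hasEntry_of_arc {T : List V} {v x : V} (hx : x ∈ T) (hv : v ∉ T) (h : A v x) :
    HasEntry A T v x :=
  ⟨hx, [], by simp, by simpa using hv, h, trivial⟩

theorem DiReach.exists_hasEntry {T : List V} {v s : V} (h : DiReach A v s) (hs : s ∈ T)
    (hv : v ∉ T) : ∃ x, HasEntry A T v x := by
  classical
  obtain ⟨l, hw, hn, hh, hl⟩ := h
  obtain ⟨x, hx⟩ : ∃ x, l.find? (· ∈ T) = some x :=
    Option.isSome_iff_exists.1 (List.find?_isSome.2 ⟨s, List.mem_of_getLast? hl, by simpa using hs⟩)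
  obtain ⟨hxT, p, q, rfl, hp⟩ := List.find?_eq_some_iff_append.1 hx
  simp only [decide_eq_true_eq] at hxT
  cases p with
  | nil =>
    obtain rfl : x = v := by simpa using hh
    exact absurd hxT hv
  | cons a R =>
    obtain rfl : a = v := by simpa using hh
    refine ⟨x, hxT, R, (List.nodup_append.1 hn).1, fun u hu => by simpa using hp u hu, ?_⟩
    rw [isDiwalk_iff_forall_mem_arcList] at hw ⊢
    rw [arcList_append_cons] at hw
    exact fun e he => hw e (List.mem_append_left _ he)

/-- An arc from `T` to `v`, followed by a dipath returning to `T`, is a ditrail whose arcs are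
not arcs of `T`. -/
theorem HasEntry.exists_ear {T : List V} {v x y : V} (h : HasEntry A T v x) (hy : y ∈ T)
    (hyv : A y v) :
    ∃ R, IsDitrail A (y :: v :: R ++ [x]) ∧
      ∀ e ∈ arcList (y :: v :: R ++ [x]), e ∉ arcList T := by
  obtain ⟨hx, R, hn, hd, hw⟩ := h
  have hnx : (v :: R ++ [x]).Nodup := by
    rw [← List.concat_eq_append]
    exact hn.concat fun hm => hd x hm hx
  have hny : y ∉ v :: R := fun hm => hd y hm hy
  refine ⟨R, ⟨⟨hyv, hw⟩, ?_⟩, ?_⟩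
  · rw [List.cons_append, List.cons_append, arcList_cons_cons, List.nodup_cons]
    refine ⟨fun hm => ?_, nodup_arcList hnx⟩
    have hm1 := (List.of_mem_zip hm).1
    have hm2 := (List.of_mem_zip hm).2
    simp only [List.tail_cons] at hm2
    rw [List.cons_append, List.nodup_cons] at hnx
    exact hnx.1 hm2
  · intro e he heT
    have heT' := mem_of_mem_arcList heT
    rw [List.cons_append, List.cons_append, arcList_cons_cons, List.mem_cons] at he
    rcases he with rfl | he
    · exact hd v List.mem_cons_self heT'.2
    · have key : ∀ (l : List V), e ∈ arcList (l ++ [x]) → e.1 ∈ l := by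
        intro l
        induction l with
        | nil => simp [arcList]
        | cons a l ih =>
          intro he
          cases l with
          | nil => simp_all [arcList]
          | cons b l =>
            rw [List.cons_append, List.cons_append, arcList_cons_cons, List.mem_cons] at he
            rcases he with rfl | he
            · exact List.mem_cons_self
            · exact List.mem_cons_of_mem _ (ih he)
      exact hd _ (key (v :: R) he) heT'.1

/-- If `s` dominates `v` and every vertex of `S` on `q` dominates `v` or satisfies `P`, then
`s :: m ++ q` has a segment whose interior avoids `S`, which starts at a vertex dominating `v`
and ends at a vertex satisfying `P`. -/
theorem exists_replaceable_segment {S : Set V} {P : V → Prop} {v : V} (q : List V) :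
    ∀ (s : V) (m : List V), A s v → (∀ u ∈ m, u ∉ S) → (∃ x ∈ q, P x) →
      (∀ u ∈ q, u ∈ S → A u v ∨ P u) →
      ∃ α y m' x β, s :: m ++ q = α ++ y :: (m' ++ x :: β) ∧ A y v ∧ P x ∧ ∀ u ∈ m', u ∉ S := by
  induction q with
  | nil => rintro s m - - ⟨x, hx, -⟩; simp at hx
  | cons c q ih =>
    intro s m hs hm hP hq
    by_cases hc : P c
    · exact ⟨[], s, m, c, q, by simp, hs, hc, hm⟩
    have hP' : ∃ x ∈ q, P x := by
      obtain ⟨x, hx, hPx⟩ := hP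
      rcases List.mem_cons.1 hx with rfl | hx
      · exact absurd hPx hc
      · exact ⟨x, hx, hPx⟩
    have hq' : ∀ u ∈ q, u ∈ S → A u v ∨ P u := fun u hu => hq u (List.mem_cons_of_mem _ hu)
    by_cases hcS : c ∈ S
    · obtain ⟨α, y, m', x, β, h, hrest⟩ :=
        ih c [] ((hq c List.mem_cons_self hcS).resolve_right hc) (by simp) hP' hq'
      exact ⟨s :: m ++ α, y, m', x, β, by simp at h; simp [h], hrest⟩
    · obtain ⟨α, y, m', x, β, h, hrest⟩ := ih s (m ++ [c]) hs
        (by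
          intro u hu
          rcases List.mem_append.1 hu with hu | hu
          · exact hm u hu
          · rw [List.mem_singleton.1 hu]; exact hcS) hP' hq'
      exact ⟨α, y, m', x, β, by simpa using h, hrest⟩

/-- Replacing a segment of a closed ditrail by a ditrail with the same ends and new arcs. -/
theorem IsClosedDitrail.replace_segment {α m R β : List V} {x y : V}
    (h : IsClosedDitrail A (α ++ y :: (m ++ x :: β))) (hR : IsDitrail A (y :: R ++ [x]))
    (hd : ∀ e ∈ arcList (y :: R ++ [x]), e ∉ arcList (α ++ y :: (m ++ x :: β))) :
    IsClosedDitrail A (α ++ y :: (R ++ x :: β)) := by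
  have key : ∀ m : List V, arcList (α ++ y :: (m ++ x :: β)) =
      arcList (α ++ [y]) ++ (arcList (y :: m ++ [x]) ++ arcList (x :: β)) := by
    intro m
    rw [arcList_append_cons, ← List.cons_append, arcList_append_cons (y :: m)]
  obtain ⟨⟨hw, hn⟩, hc⟩ := h
  obtain ⟨hRw, hRn⟩ := hR
  rw [isDiwalk_iff_forall_mem_arcList] at hw hRw
  rw [key] at hw hn hd
  refine ⟨⟨?_, ?_⟩, ?_⟩
  · rw [isDiwalk_iff_forall_mem_arcList, key]
    intro e he
    simp only [List.mem_append] at he hw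
    rcases he with he | he | he
    · exact hw e (.inl he)
    · exact hRw e he
    · exact hw e (.inr (.inr he))
  · rw [key]
    simp only [List.nodup_append', List.disjoint_append_right, List.mem_append, not_or] at hn hd ⊢
    exact ⟨hn.1, ⟨hRn, hn.2.1.2.1, fun e he he' => (hd e he).2.2 he'⟩,
      fun e he he' => (hd e he').1 he, hn.2.2.2⟩
  · have hlast : ∀ m : List V, (α ++ y :: (m ++ x :: β)).getLast? = (x :: β).getLast? := by
      intro m
      rw [List.getLast?_append_cons, ← List.cons_append, List.getLast?_append_cons]
    rw [hlast] at hc ⊢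
    rw [← hc]
    cases α <;> rfl

theorem IsClosedDitrail.exists_extension {S : Set V} {T : List V} {s v : V}
    (hT : IsClosedDitrail A T) (hs : s ∈ T) (hv : v ∉ T) (hsv : A s v) (hvs : DiReach A v s)
    (hsemi : ∀ u ∈ T, u ∈ S → A u v ∨ A v u) :
    ∃ T', IsClosedDitrail A T' ∧ v ∈ T' ∧ ∀ u ∈ T, u ∈ S → u ∈ T' := by
  obtain ⟨q, hq, hsub⟩ := hT.exists_rotate hs
  have hvq : v ∉ s :: q := mt (hsub v).1 hv
  obtain ⟨x, hx⟩ := hvs.exists_hasEntry List.mem_cons_self hvq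
  cases q with
  | nil =>
    obtain rfl : x = s := by simpa using hx.1
    obtain ⟨R, hR, -⟩ := hx.exists_ear hx.1 hsv
    refine ⟨_, ⟨hR, by rw [List.getLast?_concat]; rfl⟩, by simp, fun u hu _ => ?_⟩
    obtain rfl : u = x := by simpa using (hsub u).2 hu
    simp
  | cons c q =>
    have hsq : s ∈ c :: q := by
      have h := hq.2
      rw [List.getLast?_cons_cons] at h
      exact List.mem_of_getLast? h.symm
    have hxq : x ∈ c :: q := (List.mem_cons.1 hx.1).elim (fun h => h ▸ hsq) id
    obtain ⟨α, y, m, x, β, hdec, hyv, hx, hm⟩ :=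
      exists_replaceable_segment (S := S) (P := HasEntry A (s :: c :: q) v) (c :: q) s [] hsv
        (by simp) ⟨x, hxq, hx⟩ fun u hu huS =>
          (hsemi u ((hsub u).1 (List.mem_cons_of_mem _ hu)) huS).imp_right
            (hasEntry_of_arc (List.mem_cons_of_mem _ hu) hvq)
    rw [List.cons_append, List.nil_append] at hdec
    rw [hdec] at hx hq hsub
    obtain ⟨R, hR, hd⟩ := hx.exists_ear (by simp) hyv
    refine ⟨_, hq.replace_segment hR hd, by simp, fun u hu huS => ?_⟩
    have hum : u ∉ m := fun h => hm u h huS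
    have huT := (hsub u).2 hu
    simp only [List.mem_append, List.mem_cons] at huT ⊢
    tauto

end Ears

/-- if `D⟨S⟩` is semicomplete, `D` is `S`-strong and some closed
ditrail meets `S`, then some closed ditrail contains all of `S`. -/
theorem stmt_11 {V : Type*} [Fintype V] (A : V → V → Prop) (hirr : ∀ v, ¬ A v v)
    (S : Set V)
    (hsemi : ∀ u ∈ S, ∀ v ∈ S, u ≠ v → A u v ∨ A v u)
    (hstrong : ∀ u ∈ S, ∀ v ∈ S, u ≠ v → DiReach A u v)
    (hQ : ∃ l : List V, IsClosedDitrail A l ∧ ∃ v ∈ S, v ∈ l) :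
    ∃ l : List V, IsClosedDitrail A l ∧ ∀ v ∈ S, v ∈ l := by
  obtain ⟨l, hl, w, hwS, hwl⟩ := hQ
  induction hk : {v ∈ S | v ∉ l}.ncard using Nat.strong_induction_on generalizing l w with
  | _ k ih =>
    by_cases hall : ∀ v ∈ S, v ∈ l
    · exact ⟨l, hl, hall⟩
    push Not at hall
    obtain ⟨v, hvS, hvl⟩ := hall
    have hne : ∀ u ∈ l, u ≠ v := fun u hu huv => hvl (huv ▸ hu)
    obtain ⟨l', hl', hvl', hsub⟩ :
        ∃ l', IsClosedDitrail A l' ∧ v ∈ l' ∧ ∀ u ∈ l, u ∈ S → u ∈ l' := by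
      rcases hsemi w hwS v hvS (hne w hwl) with hwv | hvw
      · exact hl.exists_extension hwl hvl hwv (hstrong v hvS w hwS (hne w hwl).symm)
          fun u hu huS => hsemi u huS v hvS (hne u hu)
      · obtain ⟨l', hl', hvl', hsub⟩ := hl.reverse.exists_extension (S := S)
          (List.mem_reverse.2 hwl) (mt List.mem_reverse.1 hvl) hvw
          (hstrong w hwS v hvS (hne w hwl)).reverse
          fun u hu huS => hsemi v hvS u huS (hne u (List.mem_reverse.1 hu)).symm
        exact ⟨l'.reverse, hl'.reverse, List.mem_reverse.2 hvl',
          fun u hu huS => List.mem_reverse.2 (hsub u (List.mem_reverse.2 hu) huS)⟩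
    refine ih _ ?_ l' hl' w hwS (hsub w hwl hwS) rfl
    rw [← hk]
    refine Set.ncard_lt_ncard ⟨fun u hu => ⟨hu.1, fun hul => hu.2 (hsub u hul hu.1)⟩, ?_⟩
    exact fun h => (h ⟨hvS, hvl⟩).2 hvl'
end
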